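/- arXiv:1911.08154 — 2 statements merged into one kernel-verified Lean document; each statement's English description precedes it below -/
import Mathlib

section
/- Let T be a tree. Then T contains no critical 4-path and no critical copy of the star K_{1,3}; that is, there is no (not necessarily induced) path on 4 vertices all three of whose edges are α₃-critical in T, and no star with three leaves all three of whose edges are α₃-critical in T. -/
open SimpleGraph

/-- `l` is a (not necessarily induced) `k`-path in `G`: a list of `k` pairwise distinct
vertices in which consecutive vertices are adjacent. -/
def IsKPath {V : Type*} (G : SimpleGraph V) (k : ℕ) (l : List V) : Prop :=
  l.length = k ∧ l.Nodup ∧ l.Chain' G.Adj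

/-- A `k`-matching in `G`: a finite set of pairwise vertex-disjoint `k`-paths. -/
def IsKMatching {V : Type*} (G : SimpleGraph V) (k : ℕ) (M : Finset (List V)) : Prop :=
  (∀ l ∈ M, IsKPath G k l) ∧
    (M : Set (List V)).Pairwise fun l₁ l₂ => ∀ v ∈ l₁, v ∉ l₂

/-- The `k`-matching number `μ_k(G)`: the maximum cardinality of a `k`-matching. -/
noncomputable def kMatchNum {V : Type*} (G : SimpleGraph V) (k : ℕ) : ℕ :=
  sSup {n | ∃ M : Finset (List V), IsKMatching G k M ∧ M.card = n}

/-- A maximum `k`-matching: a `k`-matching of cardinality `μ_k(G)`. -/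
def IsMaxKMatching {V : Type*} (G : SimpleGraph V) (k : ℕ) (M : Finset (List V)) : Prop :=
  IsKMatching G k M ∧ M.card = kMatchNum G k

/-- A `k`-independent set: a set of vertices whose induced subgraph contains no `k`-path. -/
def IsKIndepSet {V : Type*} (G : SimpleGraph V) (k : ℕ) (S : Finset V) : Prop :=
  ∀ l : List V, IsKPath G k l → ¬ (∀ v ∈ l, v ∈ S)

/-- The `k`-independence number `α_k(G)`. -/
noncomputable def kIndepNum {V : Type*} (G : SimpleGraph V) (k : ℕ) : ℕ :=
  sSup {n | ∃ S : Finset V, IsKIndepSet G k S ∧ S.card = n}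

/-- A `k`-vertex cover: a set of vertices meeting every `k`-path of `G`. -/
def IsKCover {V : Type*} (G : SimpleGraph V) (k : ℕ) (C : Finset V) : Prop :=
  ∀ l : List V, IsKPath G k l → ∃ v ∈ l, v ∈ C

/-- The `k`-vertex cover number `τ_k(G)`. -/
noncomputable def kCoverNum {V : Type*} (G : SimpleGraph V) (k : ℕ) : ℕ :=
  sInf {n | ∃ C : Finset V, IsKCover G k C ∧ C.card = n}

/-- A dissociation set: a set of vertices inducing a subgraph of maximum degree at most 1,
i.e. every vertex of `S` has at most one neighbour inside `S`. -/
def IsDissocSet {V : Type*} (G : SimpleGraph V) (S : Finset V) : Prop :=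
  ∀ v ∈ S, ∀ u ∈ S, ∀ w ∈ S, G.Adj v u → G.Adj v w → u = w

/-- The dissociation number `α₃(G)`. -/
noncomputable def dissNum {V : Type*} (G : SimpleGraph V) : ℕ :=
  sSup {n | ∃ S : Finset V, IsDissocSet G S ∧ S.card = n}

/-- A maximum dissociation set: a dissociation set of cardinality `α₃(G)`. -/
def IsMaxDissocSet {V : Type*} (G : SimpleGraph V) (S : Finset V) : Prop :=
  IsDissocSet G S ∧ S.card = dissNum G

/-- `uv` is an `α₃`-critical edge of `G`: deleting it increases the dissociation number. -/
def IsAlpha3Critical {V : Type*} (G : SimpleGraph V) (u v : V) : Prop :=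
  G.Adj u v ∧ dissNum G < dissNum (G.deleteEdges {s(u, v)})

/-- `uv` is a `μ₃`-critical edge of `G`: deleting it decreases the `3`-matching number. -/
def IsMu3Critical {V : Type*} (G : SimpleGraph V) (u v : V) : Prop :=
  G.Adj u v ∧ kMatchNum (G.deleteEdges {s(u, v)}) 3 < kMatchNum G 3

/-- An insulated `α₃`-critical edge: an `α₃`-critical edge sharing no end-vertex with any
other `α₃`-critical edge. -/
def IsInsulated {V : Type*} (G : SimpleGraph V) (u v : V) : Prop :=
  IsAlpha3Critical G u v ∧
    ∀ x y : V, IsAlpha3Critical G x y → s(x, y) ≠ s(u, v) →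
      x ≠ u ∧ x ≠ v ∧ y ≠ u ∧ y ≠ v

/-- A flexible vertex: one lying in some but not all maximum dissociation sets. -/
def IsFlexible {V : Type*} (G : SimpleGraph V) (v : V) : Prop :=
  (∃ S : Finset V, IsMaxDissocSet G S ∧ v ∈ S) ∧
    (∃ S : Finset V, IsMaxDissocSet G S ∧ v ∉ S)

/-- The set of static-included vertices: vertices lying in every maximum dissociation set. -/
def staticIncluded {V : Type*} (G : SimpleGraph V) : Set V :=
  {v | ∀ S : Finset V, IsMaxDissocSet G S → v ∈ S}

/-- The set of static-excluded vertices: vertices lying in no maximum dissociation set. -/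
def staticExcluded {V : Type*} (G : SimpleGraph V) : Set V :=
  {v | ∀ S : Finset V, IsMaxDissocSet G S → v ∉ S}

/-- The (unordered) edge `uv` occurs as an edge of the path recorded by the list `l`. -/
def EdgeInList {V : Type*} (l : List V) (u v : V) : Prop :=
  ∃ p ∈ l.zip l.tail, p = (u, v) ∨ p = (v, u)

/-!
In a forest, packing and covering numbers of connected vertex sets agree: take the smallest piece
`D` that is joined to the rest of the forest through a single vertex `c` and contains a member of
the family; by minimality every member meeting `D` contains `c`, so `c` covers all of them, and the
members avoiding `c` are handled by induction.

For `3`-paths this yields a `3`-matching `M` with `α₃ + |M| = n`, whereas `α₃ + |M| ≤ n` for every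
`3`-matching of every graph. Hence deleting an edge that lies inside no path of `M` cannot increase
`α₃`: both ends of a critical edge lie on a common path of `M`. As the paths of `M` are disjoint,
critical edges sharing an end lie on the same path, which has only three vertices.
-/

section

variable {V : Type*} {G : SimpleGraph V}

theorem ne_of_reachable_deleteIncidenceSet {c v x : V} (hv : v ≠ c)
    (h : (G.deleteIncidenceSet c).Reachable v x) : x ≠ c := by
  rintro rfl
  obtain ⟨y, hy⟩ := h.nonempty_neighborSet_right hv
  exact (deleteIncidenceSet_adj.1 hy).2.1 rfl

theorem eq_of_adj_of_reachable_deleteIncidenceSet (hG : G.IsAcyclic) {c x y : V}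
    (hx : G.Adj c x) (hy : G.Adj c y) (h : (G.deleteIncidenceSet c).Reachable x y) : x = y := by
  by_contra hxy
  have hle : G.deleteIncidenceSet c ≤ G.deleteEdges {s(c, x)} := by
    intro p q hpq
    rw [deleteIncidenceSet_adj] at hpq
    simp only [deleteEdges_adj, Set.mem_singleton_iff, Sym2.eq_iff]
    tauto
  have hcy : (G.deleteEdges {s(c, x)}).Adj c y := by
    simp only [deleteEdges_adj, Set.mem_singleton_iff, Sym2.eq_iff]
    grind
  exact isAcyclic_iff_forall_adj_isBridge.1 hG hx (hcy.reachable.trans (h.mono hle).symm)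

theorem subset_supp_of_preconnected_induce {s : Set V} (hs : (G.induce s).Preconnected) {v : V}
    (hv : v ∈ s) : s ⊆ (G.connectedComponentMk v).supp := fun x hx ↦
  ConnectedComponent.sound <| (hs ⟨x, hx⟩ ⟨v, hv⟩).map (Embedding.induce s).toHom

/-- `D` hangs from its vertex `c`: every edge of `G` leaving `D` starts at `c`. It plays the role
of the set of descendants of `c` in a rooted tree, without a choice of roots. -/
def HangsFrom (G : SimpleGraph V) (D : Set V) (c : V) : Prop :=
  c ∈ D ∧ ∀ x ∈ D, ∀ y ∉ D, G.Adj x y → x = c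

theorem HangsFrom.supp_deleteIncidenceSet_subset {D : Set V} {c v : V} (hD : HangsFrom G D c)
    (hv : v ∈ D) : ((G.deleteIncidenceSet c).connectedComponentMk v).supp ⊆ D := by
  intro x hx
  by_contra hxD
  obtain ⟨p⟩ := (ConnectedComponent.exact hx).symm
  obtain ⟨d, -, hfst, hsnd⟩ := p.exists_boundary_dart D hv hxD
  obtain ⟨hadj, hne, -⟩ := deleteIncidenceSet_adj.1 d.adj
  exact hne (hD.2 _ hfst _ hsnd hadj)

theorem exists_hangsFrom_supp_deleteIncidenceSet (hG : G.IsAcyclic) {c v : V} (hv : v ≠ c) :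
    ∃ c', HangsFrom G ((G.deleteIncidenceSet c).connectedComponentMk v).supp c' := by
  set K := ((G.deleteIncidenceSet c).connectedComponentMk v).supp
  have hne : ∀ x ∈ K, x ≠ c := fun x hx ↦
    ne_of_reachable_deleteIncidenceSet hv (ConnectedComponent.exact hx).symm
  have hleave : ∀ x ∈ K, ∀ y ∉ K, G.Adj x y → G.Adj c x := by
    intro x hx y hy hxy
    obtain rfl : y = c := by
      by_contra hyc
      have hadj : (G.deleteIncidenceSet c).Adj x y :=
        deleteIncidenceSet_adj.2 ⟨hxy, hne x hx, hyc⟩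
      exact hy (ConnectedComponent.mem_supp_congr_adj _ hadj |>.1 hx)
    exact hxy.symm
  by_cases h : ∃ c' ∈ K, G.Adj c c'
  · obtain ⟨c', hc', hadj⟩ := h
    exact ⟨c', hc', fun x hx y hy hxy ↦ eq_of_adj_of_reachable_deleteIncidenceSet hG
      (hleave x hx y hy hxy) hadj (ConnectedComponent.exact (hx.trans hc'.symm))⟩
  · exact ⟨v, ConnectedComponent.connectedComponentMk_mem, fun x hx y hy hxy ↦
      absurd ⟨x, hx, hleave x hx y hy hxy⟩ h⟩

theorem exists_forall_mem_of_not_disjoint [Finite V] (hG : G.IsAcyclic) {F : Set (Set V)}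
    (hF : F.Nonempty) (hconn : ∀ s ∈ F, (G.induce s).Connected) :
    ∃ t ∈ F, ∃ c, ∀ s ∈ F, ¬ Disjoint s t → c ∈ s := by
  have hex : ∃ D, ∃ c, HangsFrom G D c ∧ ∃ t ∈ F, t ⊆ D := by
    obtain ⟨t, ht⟩ := hF
    obtain ⟨⟨c, -⟩⟩ := (hconn t ht).nonempty
    exact ⟨Set.univ, c, ⟨Set.mem_univ c, fun _ _ y hy ↦ absurd (Set.mem_univ y) hy⟩, t, ht,
      Set.subset_univ t⟩
  obtain ⟨D, ⟨c, hDc, t, ht, htD⟩, hmin⟩ := exists_minimal_of_wellFoundedLT _ hex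
  refine ⟨t, ht, c, fun s hs hst ↦ ?_⟩
  obtain ⟨v, hvs, hvt⟩ := Set.not_disjoint_iff.1 hst
  by_contra hcs
  have hvc : v ≠ c := fun h ↦ hcs (h ▸ hvs)
  obtain ⟨c', hKc'⟩ := exists_hangsFrom_supp_deleteIncidenceSet hG hvc
  have hsK : s ⊆ ((G.deleteIncidenceSet c).connectedComponentMk v).supp :=
    subset_supp_of_preconnected_induce
      (G.induce_deleteIncidenceSet_of_notMem hcs ▸ (hconn s hs).preconnected) hvs
  have hcK := hmin ⟨c', hKc', s, hs, hsK⟩ (hDc.supp_deleteIncidenceSet_subset (htD hvt)) hDc.1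
  exact ne_of_reachable_deleteIncidenceSet hvc (ConnectedComponent.exact hcK).symm rfl

theorem exists_pairwiseDisjoint_cover_card_le [Finite V] (hG : G.IsAcyclic) {ι : Type*}
    (f : ι → Set V) (I : Finset ι) (hconn : ∀ i ∈ I, (G.induce (f i)).Connected) :
    ∃ M ⊆ I, (M : Set ι).PairwiseDisjoint f ∧
      ∃ C : Finset V, (∀ i ∈ I, ∃ c ∈ C, c ∈ f i) ∧ C.card ≤ M.card := by
  classical
  induction I using Finset.strongInduction with
  | H I ih =>
    obtain rfl | hI := I.eq_empty_or_nonempty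
    · exact ⟨∅, subset_rfl, by simp, ∅, by simp⟩
    obtain ⟨_, ⟨j, hj, rfl⟩, c, hc⟩ := exists_forall_mem_of_not_disjoint hG
      (F := f '' I) (hI.to_set.image f) (Set.forall_mem_image.2 hconn)
    rw [Set.forall_mem_image] at hc
    have hcj : c ∈ f j := by
      obtain ⟨⟨x, hx⟩⟩ := (hconn j hj).nonempty
      exact hc hj (Set.not_disjoint_iff.2 ⟨x, hx, hx⟩)
    obtain ⟨M, hMI, hM, C, hC, hcard⟩ := ih (I.filter (c ∉ f ·))
      (Finset.filter_ssubset.2 ⟨j, hj, not_not_intro hcj⟩)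
      fun i hi ↦ hconn i (Finset.mem_of_mem_filter i hi)
    have havoid : ∀ i ∈ M, i ∈ I ∧ c ∉ f i := fun i hi ↦ Finset.mem_filter.1 (hMI hi)
    have hjM : j ∉ M := fun h ↦ (havoid j h).2 hcj
    refine ⟨insert j M, ?_, ?_, insert c C, ?_, ?_⟩
    · exact Finset.insert_subset hj fun i hi ↦ (havoid i hi).1
    · rw [Finset.coe_insert, Set.pairwiseDisjoint_insert_of_notMem hjM]
      refine ⟨hM, fun i hi ↦ ?_⟩
      by_contra hdisj
      exact (havoid i hi).2 (hc (havoid i hi).1 fun h ↦ hdisj h.symm)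
    · intro i hi
      by_cases hci : c ∈ f i
      · exact ⟨c, Finset.mem_insert_self c C, hci⟩
      · obtain ⟨x, hxC, hxi⟩ := hC i (Finset.mem_filter.2 ⟨hi, hci⟩)
        exact ⟨x, Finset.mem_insert_of_mem hxC, hxi⟩
    · rw [Finset.card_insert_of_notMem hjM]
      exact (Finset.card_insert_le c C).trans (Nat.succ_le_succ hcard)

section KPath

variable {k : ℕ} {l : List V}

theorem IsKPath.connected_induce (hl : IsKPath G k l) (hk : k ≠ 0) :
    (G.induce {v | v ∈ l}).Connected := by
  have hne : l ≠ [] := by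
    rintro rfl
    exact hk hl.1.symm
  have hchain : l.IsChain G.Adj := hl.2.2
  rw [← Walk.support_ofSupport hne hchain]
  exact (Walk.ofSupport l hne hchain).connected_induce_support

theorem IsKPath.deleteEdges (hl : IsKPath G k l) {u v : V} (huv : ¬ (u ∈ l ∧ v ∈ l)) :
    IsKPath (G.deleteEdges {s(u, v)}) k l := by
  refine ⟨hl.1, hl.2.1, ?_⟩
  have hchain : l.IsChain G.Adj := hl.2.2
  refine hchain.imp_of_mem_imp fun x y hx hy hxy ↦ ?_
  simp only [deleteEdges_adj, Set.mem_singleton_iff, Sym2.eq_iff]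
  grind

theorem IsKPath.length_le_of_subset (hl : IsKPath G k l) {l' : List V} (hl' : l'.Nodup)
    (hsub : l' ⊆ l) : l'.length ≤ k :=
  hl.1 ▸ (hl'.subperm hsub).length_le

theorem exists_isKMatching_isKCover_card_le [Finite V] (hG : G.IsAcyclic) (hk : k ≠ 0) :
    ∃ M C, IsKMatching G k M ∧ IsKCover G k C ∧ C.card ≤ M.card := by
  have hfin : {l : List V | IsKPath G k l}.Finite :=
    (List.finite_length_eq V k).subset fun _ hl ↦ hl.1
  obtain ⟨M, hMI, hdisj, C, hC, hcard⟩ := exists_pairwiseDisjoint_cover_card_le hG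
    (fun l : List V ↦ {v | v ∈ l}) hfin.toFinset
    fun l hl ↦ (hfin.mem_toFinset.1 hl).connected_induce hk
  refine ⟨M, C, ⟨fun l hl ↦ hfin.mem_toFinset.1 (hMI hl), fun l hl l' hl' hne v hv hv' ↦ ?_⟩,
    fun l hl ↦ ?_, hcard⟩
  · exact Set.disjoint_left.1 (hdisj hl hl' hne) hv hv'
  · obtain ⟨c, hcC, hcl⟩ := hC l (hfin.mem_toFinset.2 hl)
    exact ⟨c, hcl, hcC⟩

theorem IsKCover.isKIndepSet_compl [Fintype V] [DecidableEq V] {C : Finset V}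
    (hC : IsKCover G k C) : IsKIndepSet G k Cᶜ := by
  intro l hl hlC
  obtain ⟨v, hvl, hvC⟩ := hC l hl
  exact Finset.mem_compl.1 (hlC v hvl) hvC

theorem IsKMatching.eq_of_mem {M : Finset (List V)} (hM : IsKMatching G k M) {l' : List V}
    (hl : l ∈ M) (hl' : l' ∈ M) {v : V} (hv : v ∈ l) (hv' : v ∈ l') : l = l' := by
  by_contra hne
  exact hM.2 hl hl' hne v hv hv'

theorem IsKIndepSet.card_add_card_le [Finite V] {S : Finset V} (hS : IsKIndepSet G k S)
    {M : Finset (List V)} (hM : IsKMatching G k M) : S.card + M.card ≤ Nat.card V := by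
  classical
  cases nonempty_fintype V
  have hexists : ∀ l : M, ∃ v ∈ l.1, v ∉ S := fun l ↦ by
    simpa only [not_forall, exists_prop] using hS l (hM.1 l l.2)
  choose f hf hfS using hexists
  have hinj : Function.Injective f := fun l l' h ↦
    Subtype.ext (hM.eq_of_mem l.2 l'.2 (hf l) (h ▸ hf l'))
  calc S.card + M.card = S.card + (Finset.univ.image f).card := by
        rw [Finset.card_image_of_injective _ hinj, Finset.card_univ, Fintype.card_coe]
    _ ≤ S.card + Sᶜ.card := by
        gcongr
        exact Finset.image_subset_iff.2 fun l _ ↦ Finset.mem_compl.2 (hfS l)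
    _ = Nat.card V := by rw [Finset.card_add_card_compl, Nat.card_eq_fintype_card]

end KPath

section Dissociation

theorem isKIndepSet_three_iff_isDissocSet {S : Finset V} :
    IsKIndepSet G 3 S ↔ IsDissocSet G S := by
  constructor
  · intro hS v hv u hu w hw hvu hvw
    by_contra huw
    refine hS [u, v, w] ⟨rfl, ?_, ?_⟩ ?_
    · simp [huw, hvu.ne', hvw.ne]
    · exact .cons_cons hvu.symm (.cons_cons hvw (.singleton w))
    · simp [hu, hv, hw]
  · rintro hS l ⟨hlen, hnodup, hchain⟩ hlS
    obtain ⟨u, v, w, rfl⟩ := List.length_eq_three.1 hlen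
    obtain ⟨huv, hvw⟩ : G.Adj u v ∧ G.Adj v w := by
      have hchain' : [u, v, w].IsChain G.Adj := hchain
      simpa using hchain'
    have huw := hS v (hlS v (by simp)) u (hlS u (by simp)) w (hlS w (by simp)) huv.symm hvw
    simp [huw] at hnodup

variable [Finite V]

theorem bddAbove_card_isDissocSet (G : SimpleGraph V) :
    BddAbove {n | ∃ S : Finset V, IsDissocSet G S ∧ S.card = n} := by
  cases nonempty_fintype V
  exact ⟨Fintype.card V, by rintro _ ⟨S, -, rfl⟩; exact S.card_le_univ⟩

theorem IsDissocSet.card_le_dissNum {S : Finset V} (hS : IsDissocSet G S) :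
    S.card ≤ dissNum G :=
  le_csSup (bddAbove_card_isDissocSet G) ⟨S, hS, rfl⟩

theorem exists_isMaxDissocSet (G : SimpleGraph V) : ∃ S, IsMaxDissocSet G S :=
  Nat.sSup_mem (s := {n | ∃ S : Finset V, IsDissocSet G S ∧ S.card = n})
    ⟨0, ∅, by simp [IsDissocSet], rfl⟩ (bddAbove_card_isDissocSet G)

theorem IsKMatching.dissNum_add_card_le {M : Finset (List V)} (hM : IsKMatching G 3 M) :
    dissNum G + M.card ≤ Nat.card V := by
  obtain ⟨S, hS, hcard⟩ := exists_isMaxDissocSet G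
  exact hcard ▸ (isKIndepSet_three_iff_isDissocSet.2 hS).card_add_card_le hM

theorem exists_isKMatching_dissNum_add_card_eq (hG : G.IsAcyclic) :
    ∃ M, IsKMatching G 3 M ∧ dissNum G + M.card = Nat.card V := by
  classical
  cases nonempty_fintype V
  obtain ⟨M, C, hM, hC, hcard⟩ := exists_isKMatching_isKCover_card_le hG three_ne_zero
  refine ⟨M, hM, hM.dissNum_add_card_le.antisymm ?_⟩
  calc Nat.card V = Cᶜ.card + C.card := by
        rw [Finset.card_compl_add_card, Nat.card_eq_fintype_card]
    _ ≤ dissNum G + M.card := by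
        gcongr
        exact (isKIndepSet_three_iff_isDissocSet.1 hC.isKIndepSet_compl).card_le_dissNum

theorem IsAlpha3Critical.exists_mem {u v : V} (huv : IsAlpha3Critical G u v)
    {M : Finset (List V)} (hM : IsKMatching G 3 M) (hcard : dissNum G + M.card = Nat.card V) :
    ∃ l ∈ M, u ∈ l ∧ v ∈ l := by
  by_contra! hcon
  have hM' : IsKMatching (G.deleteEdges {s(u, v)}) 3 M :=
    ⟨fun l hl ↦ (hM.1 l hl).deleteEdges fun h ↦ hcon l hl h.1 h.2, hM.2⟩
  have hle := hM'.dissNum_add_card_le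
  have hlt := huv.2
  omega

theorem IsAlpha3Critical.mem_of_mem {u v : V} (huv : IsAlpha3Critical G u v)
    {M : Finset (List V)} (hM : IsKMatching G 3 M) (hcard : dissNum G + M.card = Nat.card V)
    {l : List V} (hl : l ∈ M) (hu : u ∈ l) : v ∈ l := by
  obtain ⟨l', hl', hu', hv'⟩ := huv.exists_mem hM hcard
  exact hM.eq_of_mem hl hl' hu hu' ▸ hv'

end Dissociation

theorem tree_no_critical_fourPath_no_critical_star_general [Finite V] (hG : G.IsAcyclic) :
    (¬ ∃ a b c d : V, IsKPath G 4 [a, b, c, d] ∧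
        IsAlpha3Critical G a b ∧ IsAlpha3Critical G b c ∧ IsAlpha3Critical G c d) ∧
      (¬ ∃ c x y z : V, x ≠ y ∧ x ≠ z ∧ y ≠ z ∧
        IsAlpha3Critical G c x ∧ IsAlpha3Critical G c y ∧ IsAlpha3Critical G c z) := by
  obtain ⟨M, hM, hcard⟩ := exists_isKMatching_dissNum_add_card_eq hG
  have hfour : ∀ l ∈ M, ∀ {l' : List V}, l'.Nodup → l' ⊆ l → l'.length ≠ 4 :=
    fun l hl _ hnodup hsub ↦
      (Nat.lt_succ_of_le ((hM.1 l hl).length_le_of_subset hnodup hsub)).ne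
  constructor
  · rintro ⟨a, b, c, d, hpath, hab, hbc, hcd⟩
    obtain ⟨l, hl, ha, hb⟩ := hab.exists_mem hM hcard
    have hc := hbc.mem_of_mem hM hcard hl hb
    have hd := hcd.mem_of_mem hM hcard hl hc
    exact hfour l hl hpath.2.1 (by simp [ha, hb, hc, hd]) rfl
  · rintro ⟨c, x, y, z, hxy, hxz, hyz, hcx, hcy, hcz⟩
    obtain ⟨l, hl, hc, hx⟩ := hcx.exists_mem hM hcard
    have hy := hcy.mem_of_mem hM hcard hl hc
    have hz := hcz.mem_of_mem hM hcard hl hc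
    have hnodup : [c, x, y, z].Nodup := by
      simp [hcx.1.ne, hcy.1.ne, hcz.1.ne, hxy, hxz, hyz]
    exact hfour l hl hnodup (by simp [hc, hx, hy, hz]) rfl

end

/-- A tree contains no critical `4`-path and no critical copy of the star `K_{1,3}`:
there is no (not necessarily induced) path on `4` vertices all of whose edges are
`α₃`-critical, and no star with three leaves all of whose edges are `α₃`-critical. -/
theorem tree_no_critical_fourPath_no_critical_star {V : Type*} [Fintype V] [DecidableEq V]
    (T : SimpleGraph V) (hT : T.IsTree) :
    (¬ ∃ a b c d : V, IsKPath T 4 [a, b, c, d] ∧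
        IsAlpha3Critical T a b ∧ IsAlpha3Critical T b c ∧ IsAlpha3Critical T c d) ∧
      (¬ ∃ c x y z : V, x ≠ y ∧ x ≠ z ∧ y ≠ z ∧
        IsAlpha3Critical T c x ∧ IsAlpha3Critical T c y ∧ IsAlpha3Critical T c z) :=
  tree_no_critical_fourPath_no_critical_star_general hT.isAcyclic
end

section
/- Let T be a tree and let 𝒜_T denote the set of static-included vertices of T. Then no vertex of any critical 3-path of T (a 3-path both of whose edges are α₃-critical in T) is adjacent to a vertex of 𝒜_T. -/
open SimpleGraph

/-!
Deleting an end of a critical edge `e` from a maximum dissociation set of `G - e` leaves a maximum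
dissociation set of `G`, so no end of a critical edge is static-included. If `e` is moreover a
bridge, as always in a tree, an exchange across it shows that every maximum dissociation set of
`G` meets `e`. Let `f = bc` be another critical edge, sharing the end `b` with `e = ab`, and let
`S` be a maximum dissociation set of `G - f`. Then `S \ {b}` meets `e`, hence contains `a`, and
`S \ {c}` is a maximum dissociation set of `G` containing `a` and `b`. A static-included neighbour
of `a` or `b` would also lie in `S \ {c}` and so be an end of `e`, which is impossible.
-/

section CriticalEdge

variable {V : Type*} {G H : SimpleGraph V} {P Q S : Finset V} {e f : Sym2 V} {b c v w x : V}

theorem IsDissocSet.anti (hGH : G ≤ H) (hS : IsDissocSet H S) : IsDissocSet G S :=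
  fun v hv u hu w hw hvu hvw => hS v hv u hu w hw (hGH hvu) (hGH hvw)

theorem IsDissocSet.subset (hPS : P ⊆ S) (hS : IsDissocSet G S) : IsDissocSet G P :=
  fun v hv u hu w hw => hS v (hPS hv) u (hPS hu) w (hPS hw)

theorem IsDissocSet.of_deleteEdges (hS : IsDissocSet (G.deleteEdges {e}) S) (hv : v ∈ e)
    (hvS : v ∉ S) : IsDissocSet G S := by
  have adj_deleteEdges : ∀ x ∈ S, ∀ y ∈ S, G.Adj x y → (G.deleteEdges {e}).Adj x y := by
    rintro x hx y hy hxy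
    refine deleteEdges_adj.mpr ⟨hxy, ?_⟩
    rintro rfl
    rcases Sym2.mem_iff.mp hv with rfl | rfl <;> contradiction
  exact fun x hx y hy z hz hxy hxz =>
    hS x hx y hy z hz (adj_deleteEdges x hx y hy hxy) (adj_deleteEdges x hx z hz hxz)

theorem IsDissocSet.union [DecidableEq V] (hP : IsDissocSet G P) (hQ : IsDissocSet G Q)
    (hPQ : ∀ x ∈ P, ∀ y ∈ Q, ¬ G.Adj x y) : IsDissocSet G (P ∪ Q) := by
  intro x hx y hy z hz hxy hxz
  rcases Finset.mem_union.mp hx with hx | hx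
  · have mem_left : ∀ u ∈ P ∪ Q, G.Adj x u → u ∈ P := fun u hu hxu =>
      (Finset.mem_union.mp hu).resolve_right fun huQ => hPQ x hx u huQ hxu
    exact hP x hx y (mem_left y hy hxy) z (mem_left z hz hxz) hxy hxz
  · have mem_right : ∀ u ∈ P ∪ Q, G.Adj x u → u ∈ Q := fun u hu hxu =>
      (Finset.mem_union.mp hu).resolve_left fun huP => hPQ u huP x hx hxu.symm
    exact hQ x hx y (mem_right y hy hxy) z (mem_right z hz hxz) hxy hxz

theorem card_filter_union_filter_not_add [DecidableEq V] (P Q : Finset V) (p : V → Prop)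
    [DecidablePred p] :
    (P.filter p ∪ Q.filter (¬ p ·)).card + (Q.filter p ∪ P.filter (¬ p ·)).card =
      P.card + Q.card := by
  rw [Finset.card_union_of_disjoint (Finset.disjoint_filter_filter_not P Q p),
    Finset.card_union_of_disjoint (Finset.disjoint_filter_filter_not Q P p),
    ← P.card_filter_add_card_filter_not p, ← Q.card_filter_add_card_filter_not p]
  ring

theorem exists_cut_of_isBridge (h : G.IsBridge s(b, c)) :
    ∃ C : Set V, b ∈ C ∧ c ∉ C ∧ ∀ x ∈ C, ∀ y ∉ C, G.Adj x y → x = b ∧ y = c := by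
  refine ⟨{v | (G.deleteEdges {s(b, c)}).Reachable b v}, .rfl, h, fun x hx y hy hxy => ?_⟩
  have edge_eq : s(x, y) = s(b, c) := by
    by_contra hne
    exact hy (hx.trans (Adj.reachable (deleteEdges_adj.mpr ⟨hxy, hne⟩)))
  rcases Sym2.eq_iff.mp edge_eq with hbc | ⟨-, rfl⟩
  · exact hbc
  · exact absurd .rfl hy

/-- `e` is an `α₃`-critical edge of `G`: the notion `IsAlpha3Critical` for an edge given as an
unordered pair, so that its two ends need not be distinguished. -/
def IsAlpha3CriticalEdge (G : SimpleGraph V) (e : Sym2 V) : Prop :=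
  e ∈ G.edgeSet ∧ dissNum G < dissNum (G.deleteEdges {e})

namespace IsAlpha3CriticalEdge

-- `dissNum` takes the junk value `0` on graphs with arbitrarily large dissociation sets.
theorem bddAbove_card_deleteEdges (he : IsAlpha3CriticalEdge G e) :
    BddAbove {n | ∃ S : Finset V, IsDissocSet (G.deleteEdges {e}) S ∧ S.card = n} := by
  by_contra hunbounded
  exact (he.2.trans_eq (Nat.sSup_of_not_bddAbove hunbounded)).not_ge (Nat.zero_le _)

theorem exists_isMaxDissocSet_deleteEdges (he : IsAlpha3CriticalEdge G e) :
    ∃ S, IsMaxDissocSet (G.deleteEdges {e}) S :=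
  Nat.sSup_mem (s := {n | ∃ S : Finset V, IsDissocSet (G.deleteEdges {e}) S ∧ S.card = n})
    ⟨0, ∅, by simp [IsDissocSet], rfl⟩ he.bddAbove_card_deleteEdges

theorem card_le_dissNum (he : IsAlpha3CriticalEdge G e) (hS : IsDissocSet G S) :
    S.card ≤ dissNum G := by
  refine le_csSup (he.bddAbove_card_deleteEdges.mono ?_) ⟨S, hS, rfl⟩
  rintro n ⟨P, hP, hcard⟩
  exact ⟨P, hP.anti (deleteEdges_le _), hcard⟩

theorem mem_of_isMaxDissocSet_deleteEdges (he : IsAlpha3CriticalEdge G e)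
    (hS : IsMaxDissocSet (G.deleteEdges {e}) S) (hv : v ∈ e) : v ∈ S := by
  by_contra hvS
  have hle : S.card ≤ dissNum G := he.card_le_dissNum (hS.1.of_deleteEdges hv hvS)
  exact (he.2.trans_eq hS.2.symm).not_ge hle

theorem isMaxDissocSet_erase [DecidableEq V] (he : IsAlpha3CriticalEdge G e)
    (hS : IsMaxDissocSet (G.deleteEdges {e}) S) (hv : v ∈ e) : IsMaxDissocSet G (S.erase v) := by
  have hdissoc : IsDissocSet G (S.erase v) :=
    (hS.1.subset (S.erase_subset v)).of_deleteEdges hv (S.notMem_erase v)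
  have hcard := Finset.card_erase_add_one (he.mem_of_isMaxDissocSet_deleteEdges hS hv)
  have hlt : dissNum G < S.card := he.2.trans_eq hS.2.symm
  exact ⟨hdissoc, (he.card_le_dissNum hdissoc).antisymm (by lia)⟩

theorem notMem_of_mem_staticIncluded (he : IsAlpha3CriticalEdge G e)
    (hw : w ∈ staticIncluded G) : w ∉ e := by
  classical
  intro hwe
  obtain ⟨S, hS⟩ := he.exists_isMaxDissocSet_deleteEdges
  exact S.notMem_erase w (hw _ (he.isMaxDissocSet_erase hS hwe))

/-- Otherwise, exchanging one side of the bridge between the given set and a maximum dissociation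
set of `G - e` yields two dissociation sets of `G` with `2 α₃(G) + 1` vertices in total. -/
theorem exists_mem_of_isBridge (he : IsAlpha3CriticalEdge G e) (hbridge : G.IsBridge e)
    (hP : IsMaxDissocSet G P) : ∃ v ∈ e, v ∈ P := by
  classical
  by_contra! havoid
  obtain ⟨Q, hQ⟩ := he.exists_isMaxDissocSet_deleteEdges
  induction e with | h b c
  obtain ⟨C, hbC, hcC, hcut⟩ := exists_cut_of_isBridge hbridge
  have hbP : b ∉ P := havoid b (Sym2.mem_mk_left b c)
  have hcP : c ∉ P := havoid c (Sym2.mem_mk_right b c)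
  have hPQ : IsDissocSet G (P.filter (· ∈ C) ∪ Q.filter (· ∉ C)) := by
    refine (hP.1.subset (P.filter_subset _)).union
      ((hQ.1.subset (Q.filter_subset _)).of_deleteEdges (Sym2.mem_mk_left b c) (by simp [hbC])) ?_
    intro x hx y hy hxy
    rw [Finset.mem_filter] at hx hy
    exact hbP ((hcut x hx.2 y hy.2 hxy).1 ▸ hx.1)
  have hQP : IsDissocSet G (Q.filter (· ∈ C) ∪ P.filter (· ∉ C)) := by
    refine IsDissocSet.union ((hQ.1.subset (Q.filter_subset _)).of_deleteEdges
      (Sym2.mem_mk_right b c) (by simp [hcC])) (hP.1.subset (P.filter_subset _)) ?_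
    intro x hx y hy hxy
    rw [Finset.mem_filter] at hx hy
    exact hcP ((hcut x hx.2 y hy.2 hxy).2 ▸ hy.1)
  have hlt : dissNum G + dissNum G < dissNum G + dissNum G := calc
    dissNum G + dissNum G < P.card + Q.card := by
      rw [hP.2, hQ.2]; exact Nat.add_lt_add_left he.2 _
    _ = (P.filter (· ∈ C) ∪ Q.filter (· ∉ C)).card +
        (Q.filter (· ∈ C) ∪ P.filter (· ∉ C)).card :=
      (card_filter_union_filter_not_add P Q (· ∈ C)).symm
    _ ≤ dissNum G + dissNum G := Nat.add_le_add (he.card_le_dissNum hPQ) (he.card_le_dissNum hQP)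
  exact hlt.false

theorem exists_isMaxDissocSet_forall_mem (he : IsAlpha3CriticalEdge G e) (hbridge : G.IsBridge e)
    (hf : IsAlpha3CriticalEdge G f) (hef : e ≠ f) (hbe : b ∈ e) (hbf : b ∈ f) :
    ∃ P, IsMaxDissocSet G P ∧ ∀ v ∈ e, v ∈ P := by
  classical
  obtain ⟨a, rfl⟩ := Sym2.mem_iff_exists.mp hbe
  obtain ⟨c, rfl⟩ := Sym2.mem_iff_exists.mp hbf
  have hac : a ≠ c := fun h => hef (h ▸ rfl)
  have hbc : b ≠ c := Adj.ne hf.1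
  obtain ⟨S, hS⟩ := hf.exists_isMaxDissocSet_deleteEdges
  have hbS : b ∈ S := hf.mem_of_isMaxDissocSet_deleteEdges hS hbf
  have haS : a ∈ S := by
    obtain ⟨v, hv, hvS⟩ := he.exists_mem_of_isBridge hbridge (hf.isMaxDissocSet_erase hS hbf)
    obtain ⟨hvb, hvS⟩ := Finset.mem_erase.mp hvS
    exact (Sym2.mem_iff.mp hv).resolve_left hvb ▸ hvS
  refine ⟨S.erase c, hf.isMaxDissocSet_erase hS (Sym2.mem_mk_right b c), Sym2.ball.mpr ?_⟩
  exact ⟨Finset.mem_erase.mpr ⟨hbc, hbS⟩, Finset.mem_erase.mpr ⟨hac, haS⟩⟩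

theorem not_adj_of_mem_staticIncluded (he : IsAlpha3CriticalEdge G e) (hbridge : G.IsBridge e)
    (hf : IsAlpha3CriticalEdge G f) (hef : e ≠ f) (hbe : b ∈ e) (hbf : b ∈ f)
    (hx : x ∈ e) (hw : w ∈ staticIncluded G) : ¬ G.Adj x w := by
  intro hxw
  obtain ⟨P, hP, heP⟩ := he.exists_isMaxDissocSet_forall_mem hbridge hf hef hbe hbf
  obtain ⟨y, rfl⟩ := Sym2.mem_iff_exists.mp hx
  have hyP : y ∈ P := heP y (Sym2.mem_mk_right x y)
  have hwy : w = y := hP.1 x (heP x hx) w (hw P hP) y hyP hxw he.1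
  exact he.notMem_of_mem_staticIncluded hw (hwy ▸ Sym2.mem_mk_right x y)

end IsAlpha3CriticalEdge

end CriticalEdge

theorem tree_critical_threePath_not_adj_staticIncluded_general {V : Type*} {G : SimpleGraph V}
    {a b c : V} (hac : a ≠ c) (hab : IsAlpha3Critical G a b) (hbc : IsAlpha3Critical G b c)
    (hab_bridge : G.IsBridge s(a, b)) (hbc_bridge : G.IsBridge s(b, c)) :
    ∀ x ∈ ({a, b, c} : Set V), ∀ w ∈ staticIncluded G, ¬ G.Adj x w := by
  intro x hx w hw
  have he : IsAlpha3CriticalEdge G s(a, b) := hab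
  have hf : IsAlpha3CriticalEdge G s(b, c) := hbc
  have hef : s(a, b) ≠ s(b, c) := by grind
  have hbe : b ∈ s(a, b) := Sym2.mem_mk_right a b
  have hbf : b ∈ s(b, c) := Sym2.mem_mk_left b c
  have hx_edge : x ∈ s(a, b) ∨ x ∈ s(b, c) := by grind
  rcases hx_edge with hxe | hxf
  · exact he.not_adj_of_mem_staticIncluded hab_bridge hf hef hbe hbf hxe hw
  · exact hf.not_adj_of_mem_staticIncluded hbc_bridge he hef.symm hbf hbe hxf hw

/-- No vertex of any critical `3`-path of a tree `T` is adjacent to a vertex of `𝒜_T`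
(the set of static-included vertices). -/
theorem tree_critical_threePath_not_adj_staticIncluded {V : Type*} [Fintype V]
    [DecidableEq V] (T : SimpleGraph V) (hT : T.IsTree) :
    ∀ a b c : V, IsKPath T 3 [a, b, c] →
      IsAlpha3Critical T a b → IsAlpha3Critical T b c →
        ∀ x ∈ ({a, b, c} : Set V), ∀ w ∈ staticIncluded T, ¬ T.Adj x w := by
  intro a b c hp hab hbc
  have hbridge := isAcyclic_iff_forall_adj_isBridge.mp hT.isAcyclic
  have hac : a ≠ c := by grind [hp.2.1]
  exact tree_critical_threePath_not_adj_staticIncluded_general hac hab hbc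
    (hbridge hab.1) (hbridge hbc.1)
end
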